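/- Let p be a prime and let G be a finite Camina p-group. Then G satisfies the unique intersection number condition: for every pair of distinct conjugacy classes C_h ≠ C_i of G there is exactly one conjugacy class C_j with C_h ∩ C_iC_j ≠ ∅. -/

import Mathlib

open Pointwise

/-- A group `G` satisfies the *unique intersection number condition* (condition (3) of
Tanaka's theorem, equivalent to the Terwilliger algebra of the group association scheme of `G`
being almost commutative) if for every pair of distinct conjugacy classes `Ch ≠ Ci` of `G`
there is exactly one conjugacy class `Cj` with `Ch ∩ (Ci * Cj) ≠ ∅`. -/
def UniqueIntersectionNumberCondition (G : Type*) [Group G] : Prop :=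
  ∀ Ch Ci : ConjClasses G, Ch ≠ Ci →
    ∃! Cj : ConjClasses G, (Ch.carrier ∩ (Ci.carrier * Cj.carrier)).Nonempty

/-- A group `G` is a *Camina group* if the conjugacy class of every element `g` outside the
derived subgroup `G' = [G,G]` equals the coset `gG'`. -/
def IsCaminaGroup (G : Type*) [Group G] : Prop :=
  ∀ g : G, g ∉ commutator G → conjugatesOf g = g • (commutator G : Set G)

/-!
Write `γ₁ = G`, `γ₂ = G'`, … for the lower central series, so that `γₙ₊₁ = lcs G n`. If the class of
every `x ∈ γₙ ∖ γₙ₊₁` is the coset `xγₙ₊₁`, and `i⁻¹h ∈ γₙ ∖ γₙ₊₁` for non-conjugate `i` and `h`,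
then both lie in `γₙ`, and moving them inside their classes changes `i⁻¹h` only by an element of
`γₙ₊₁`, that is, inside its class.

For `n = 1` the coset condition is the Camina property. For larger `n` it follows from the theorem
of Dark and Scoppola that `γ₄ = 1`, whose proof is linear algebra over `𝔽ₚ`: the factors `γₙ/γₙ₊₁`
have exponent `p`, and the commutator induces brackets between them. If all nonzero members of a
linear space `S` of alternating forms on `V` are nondegenerate, then `2 dim S ≤ dim V`, because
otherwise the Pfaffian, of degree `dim V / 2`, would have a nontrivial zero on `S` by
Chevalley–Warning. With the Jacobi identity this determines the dimensions of the brackets tightly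
enough that a nonzero functional on `γ₃/γ₄` (`p = 2`) or on `γ₄/γ₅` (`p` odd) cannot exist. The case
`n = 2` is a by-product: the bracket of a nonzero element of `γ₂/γ₃` with `γ₁/γ₂` is onto `γ₃/γ₄`.
-/

section SkewDeterminant

open Matrix

theorem exists_det_sub_transpose_eq_sq_mul {K n : Type*} [Field K] [Fintype n] [DecidableEq n]
    (T : Matrix (Fin 2 ⊕ n) (Fin 2 ⊕ n) K) (hT : T (.inl 0) (.inl 1) ≠ T (.inl 1) (.inl 0)) :
    ∃ S : Matrix n n K,
      (T - Tᵀ).det = (T (.inl 0) (.inl 1) - T (.inl 1) (.inl 0)) ^ 2 * (S - Sᵀ).det := by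
  obtain ⟨P, Q, R, D, rfl⟩ : ∃ P Q R D, T = fromBlocks P Q R D :=
    ⟨_, _, _, _, T.fromBlocks_toBlocks.symm⟩
  set a : K := P 0 1 - P 1 0 with ha
  have ha0 : a ≠ 0 := sub_ne_zero.mpr hT
  set B : Matrix (Fin 2) n K := Q - Rᵀ with hB
  set N : Matrix (Fin 2) (Fin 2) K := !![0, -a⁻¹; 0, 0] with hN
  have hP : P - Pᵀ = !![0, a; -a, 0] := by
    ext i j
    fin_cases i <;> fin_cases j <;> simp [ha]
  have hPN : (P - Pᵀ) * (N - Nᵀ) = 1 := by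
    rw [hP, hN]
    ext i j
    fin_cases i <;> fin_cases j <;> simp [Matrix.mul_apply, ha0]
  have hblocks : fromBlocks P Q R D - (fromBlocks P Q R D)ᵀ =
      fromBlocks (P - Pᵀ) B (-Bᵀ) (D - Dᵀ) := by
    rw [fromBlocks_transpose, sub_eq_add_neg, fromBlocks_neg, fromBlocks_add]
    simp [hB, sub_eq_add_neg]
  let := invertibleOfRightInverse _ _ hPN
  refine ⟨D + Bᵀ * N * B, ?_⟩
  rw [hblocks, det_fromBlocks₁₁, invOf_eq_right_inv hPN, hP, det_fin_two_of]
  congr 2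
  · simp only [fromBlocks_apply₁₁]
    ring
  · simp only [transpose_add, transpose_mul, transpose_transpose, Matrix.mul_sub, Matrix.neg_mul,
      Matrix.sub_mul, Matrix.mul_assoc]
    abel

theorem isSquare_det_sub_transpose_of_field {K n : Type*} [Field K] [Fintype n] [DecidableEq n]
    (T : Matrix n n K) : IsSquare (T - Tᵀ).det := by
  induction hn : Fintype.card n using Nat.strong_induction_on generalizing n with
  | _ N ih =>
  by_cases hT : T = Tᵀ
  · rw [sub_eq_zero.mpr hT]
    rcases isEmpty_or_nonempty n with _ | _ <;> simp
  obtain ⟨i, j, hij⟩ : ∃ i j, T i j ≠ T j i := by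
    by_contra! h
    exact hT (Matrix.ext h)
  have hinj : Function.Injective ![i, j] := by
    rw [injective_pair_iff_ne]
    rintro rfl
    exact hij rfl
  classical
  let e : Fin 2 ⊕ ↥(Set.range ![i, j])ᶜ ≃ n :=
    (Equiv.sumCongr (Equiv.ofInjective _ hinj) (Equiv.refl _)).trans (Equiv.Set.sumCompl _)
  obtain ⟨S, hS⟩ := exists_det_sub_transpose_eq_sq_mul (T.submatrix e e) hij
  have hcard : Fintype.card ↥(Set.range ![i, j])ᶜ < N := by
    rw [← hn, ← Fintype.card_congr e, Fintype.card_sum, Fintype.card_fin]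
    omega
  rw [transpose_submatrix] at hS
  rw [← det_submatrix_equiv_self e, submatrix_sub]
  change IsSquare (T.submatrix e e - Tᵀ.submatrix e e).det
  rw [hS]
  exact (IsSquare.sq _).mul (ih _ hcard S rfl)

-- The determinant of the generic matrix is a square in the fraction field of the integrally closed
-- ring `ℤ[Xᵢⱼ]`, hence in `ℤ[Xᵢⱼ]`, and every other matrix is a specialization.
theorem isSquare_det_sub_transpose {R n : Type*} [CommRing R] [Fintype n] [DecidableEq n]
    (T : Matrix n n R) : IsSquare (T - Tᵀ).det := by
  let X : Matrix n n (MvPolynomial (n × n) ℤ) := mvPolynomialX n n ℤ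
  let F := FractionRing (MvPolynomial (n × n) ℤ)
  have hX : IsSquare (X - Xᵀ).det := by
    obtain ⟨d, hd⟩ := isSquare_det_sub_transpose_of_field (X.map (algebraMap _ F))
    have hmap : algebraMap _ F (X - Xᵀ).det = d ^ 2 := by
      rw [RingHom.map_det, pow_two, ← hd, map_sub, RingHom.mapMatrix_apply,
        RingHom.mapMatrix_apply, transpose_map]
    obtain ⟨P, rfl⟩ := IsIntegrallyClosed.exists_algebraMap_eq_of_isIntegral_pow
      (R := MvPolynomial (n × n) ℤ) two_pos (hmap ▸ isIntegral_algebraMap)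
    refine ⟨P, IsFractionRing.injective _ F ?_⟩
    rw [hmap, pow_two, map_mul]
  let spec : MvPolynomial (n × n) ℤ →ₐ[ℤ] R := MvPolynomial.aeval fun ij => T ij.1 ij.2
  have hT : X.map spec = T := mvPolynomialX_mapMatrix_aeval ℤ T
  have hspec := hX.map spec
  rwa [AlgHom.map_det, map_sub, AlgHom.mapMatrix_apply, AlgHom.mapMatrix_apply,
    transpose_map, hT] at hspec

end SkewDeterminant

section AlternatingForms

open Matrix Module

theorem totalDegree_det_le {R ι n : Type*} [CommRing R] [Fintype n] [DecidableEq n]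
    (M : Matrix n n (MvPolynomial ι R)) {d : ℕ} (hM : ∀ i j, (M i j).totalDegree ≤ d) :
    M.det.totalDegree ≤ Fintype.card n * d := by
  rw [det_apply]
  refine MvPolynomial.totalDegree_finsetSum_le fun σ _ => ?_
  calc _ ≤ (∏ i, M (σ i) i).totalDegree := MvPolynomial.totalDegree_smul_le _ _
    _ ≤ ∑ i, (M (σ i) i).totalDegree := MvPolynomial.totalDegree_finsetProd _ _
    _ ≤ Fintype.card n * d := Finset.sum_le_card_nsmul _ _ d fun i _ => hM (σ i) i

-- `P` is the Pfaffian of the generic linear combination of the skew matrices `T k - (T k)ᵀ`.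
theorem exists_mvPolynomial_eval_sq_eq_det {K ι n : Type*} [Field K] [Fintype ι] [Fintype n]
    [DecidableEq n] (T : ι → Matrix n n K) :
    ∃ P : MvPolynomial ι K, 2 * P.totalDegree ≤ Fintype.card n ∧
      ∀ x : ι → K, MvPolynomial.eval x P ^ 2 = (∑ k, x k • (T k - (T k)ᵀ)).det := by
  let M : Matrix n n (MvPolynomial ι K) :=
    of fun i j => ∑ k, MvPolynomial.C (T k i j) * MvPolynomial.X k
  have hM : ∀ i j, (M i j).totalDegree ≤ 1 := fun i j =>
    MvPolynomial.totalDegree_finsetSum_le fun k _ =>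
      (MvPolynomial.totalDegree_mul _ _).trans (by simp)
  obtain ⟨P, hP⟩ := isSquare_det_sub_transpose M
  refine ⟨P, ?_, fun x => ?_⟩
  · have hdeg := totalDegree_det_le (M - Mᵀ) (d := 1) fun i j =>
      (MvPolynomial.totalDegree_sub _ _).trans (max_le (hM i j) (hM j i))
    by_cases hP0 : P = 0
    · simp [hP0]
    · rw [hP, MvPolynomial.totalDegree_mul_of_isDomain hP0 hP0] at hdeg
      omega
  · rw [pow_two, ← map_mul, ← hP, RingHom.map_det]
    congr 1
    ext i j
    simp [M, Matrix.sum_apply, mul_comm (x _), sub_mul]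

theorem card_le_totalDegree_of_eval_eq_zero_iff {K ι : Type*} [Field K] [Finite K] [Fintype ι]
    {P : MvPolynomial ι K} (hP : ∀ x, MvPolynomial.eval x P = 0 ↔ x = 0) :
    Fintype.card ι ≤ P.totalDegree := by
  classical
  have := Fintype.ofFinite K
  by_contra! hlt
  obtain ⟨p, _⟩ := CharP.exists K
  have := CharP.char_is_prime K p
  have hdvd := char_dvd_card_solutions p hlt
  simp only [hP, Fintype.card_unique] at hdvd
  exact this.one_lt.not_ge (Nat.le_of_dvd one_pos hdvd)

theorem exists_toMatrix₂_eq_sub_transpose {R V ι : Type*} [CommRing R] [AddCommGroup V]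
    [Module R V] [Fintype ι] [LinearOrder ι] {B : V →ₗ[R] V →ₗ[R] R} (hB : B.IsAlt)
    (b : Basis ι R V) : ∃ T : Matrix ι ι R, LinearMap.toMatrix₂ b b B = T - Tᵀ := by
  refine ⟨of fun i j => if i < j then B (b i) (b j) else 0, ?_⟩
  ext i j
  rcases lt_trichotomy i j with h | rfl | h
  · simp [h, h.not_gt]
  · simp [hB.self_eq_zero]
  · simp [h, h.not_gt, hB.neg]

theorem two_mul_finrank_le_of_isAlt_of_separatingLeft {K S V : Type*} [Field K] [Finite K]
    [AddCommGroup S] [Module K S] [AddCommGroup V] [Module K V] [Nontrivial V]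
    [FiniteDimensional K V] (A : S →ₗ[K] V →ₗ[K] V →ₗ[K] K) (halt : ∀ s, (A s).IsAlt)
    (hsep : ∀ s, s ≠ 0 → (A s).SeparatingLeft) : 2 * finrank K S ≤ finrank K V := by
  have hinj : Function.Injective A := by
    refine (injective_iff_map_eq_zero A).mpr fun s hs => ?_
    by_contra hs0
    obtain ⟨v, hv⟩ := exists_ne (0 : V)
    exact hv (hsep s hs0 v fun _ => by rw [hs]; rfl)
  have := Module.Finite.of_injective A hinj
  let bS := finBasis K S
  let bV := finBasis K V
  choose T hT using fun k => exists_toMatrix₂_eq_sub_transpose (halt (bS k)) bV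
  obtain ⟨P, hdeg, hP⟩ := exists_mvPolynomial_eval_sq_eq_det T
  have hdet : ∀ x, MvPolynomial.eval x P ^ 2 =
      (LinearMap.toMatrix₂ bV bV (A (bS.equivFun.symm x))).det := fun x => by
    rw [hP, Basis.equivFun_symm_apply]
    simp only [map_sum, map_smul, hT]
  have hzero : ∀ x, MvPolynomial.eval x P = 0 ↔ x = 0 := fun x => by
    rw [← sq_eq_zero_iff, hdet]
    constructor
    · contrapose!
      intro hx
      exact (LinearMap.separatingLeft_iff_det_ne_zero bV).mp
        (hsep _ (bS.equivFun.symm.map_ne_zero_iff.mpr hx))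
    · rintro rfl
      have : Nonempty (Fin (finrank K V)) := Fin.pos_iff_nonempty.mp finrank_pos
      simp
  have hcard := card_le_totalDegree_of_eval_eq_zero_iff hzero
  rw [Fintype.card_fin] at hcard hdeg
  omega

end AlternatingForms

section BilinearForms

open Module LinearMap

variable {K S V W : Type*} [Field K] [AddCommGroup S] [Module K S] [AddCommGroup V] [Module K V]
  [AddCommGroup W] [Module K W]

theorem finrank_map_add_finrank_inf_ker [FiniteDimensional K V] (f : V →ₗ[K] W)
    (U : Submodule K V) :
    finrank K (U.map f) + finrank K (U ⊓ ker f : Submodule K V) = finrank K U := by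
  have h := finrank_range_add_finrank_ker (f.domRestrict U)
  rwa [range_domRestrict, ker_domRestrict, ← Submodule.finrank_map_subtype_eq,
    Submodule.map_comap_subtype] at h

theorem finrank_comap_of_surjective [FiniteDimensional K V] {f : V →ₗ[K] W}
    (hf : Function.Surjective f) (U : Submodule K W) :
    finrank K (U.comap f) = finrank K U + finrank K (ker f) := by
  have h := finrank_map_add_finrank_inf_ker f (U.comap f)
  rw [Submodule.map_comap_eq_of_surjective hf, inf_eq_right.mpr (ker_le_comap f)] at h
  exact h.symm

theorem finrank_range_flip [FiniteDimensional K V] (B : W →ₗ[K] V →ₗ[K] K) :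
    finrank K (range B.flip) = finrank K (range B) := by
  have hB : B.flip = B.dualMap ∘ₗ (evalEquiv K V : V →ₗ[K] Dual K (Dual K V)) := rfl
  rw [hB, LinearEquiv.range_comp, finrank_range_dualMap_eq_finrank_range]

theorem two_mul_finrank_le_of_isotropic [FiniteDimensional K V] {B : V →ₗ[K] V →ₗ[K] K}
    (hB : B.SeparatingLeft) {U : Submodule K V} (hU : ∀ x ∈ U, ∀ y ∈ U, B x y = 0) :
    2 * finrank K U ≤ finrank K V := by
  have hle : U.map B ≤ U.dualAnnihilator := by
    rintro _ ⟨x, hx, rfl⟩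
    exact (Submodule.mem_dualAnnihilator _).mpr fun y hy => hU x hx y hy
  have hmap := Submodule.equivMapOfInjective B
    (ker_eq_bot.mp (separatingLeft_iff_ker_eq_bot.mp hB)) U
  have hmono : finrank K U ≤ finrank K U.dualAnnihilator :=
    hmap.finrank_eq.trans_le (Submodule.finrank_mono hle)
  have hann := Subspace.finrank_add_finrank_dualAnnihilator_eq U
  omega

theorem two_mul_finrank_add_finrank_le_of_ker_eq [Finite K] [FiniteDimensional K V]
    (A : S →ₗ[K] V →ₗ[K] V →ₗ[K] K) (halt : ∀ s, (A s).IsAlt) {N : Submodule K V} (hN : N ≠ ⊤)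
    (hker : ∀ s, s ≠ 0 → ker (A s) = N) :
    2 * finrank K S + finrank K N ≤ finrank K V := by
  obtain ⟨M, hNM⟩ := Submodule.exists_isCompl N
  have hM : Nontrivial M := Submodule.nontrivial_iff_ne_bot.mpr fun h =>
    hN (by simpa [h] using hNM.sup_eq_top)
  let A' : S →ₗ[K] M →ₗ[K] M →ₗ[K] K :=
    { toFun := fun s => (A s).domRestrict₁₂ M M
      map_add' := fun _ _ => by rw [map_add]; rfl
      map_smul' := fun _ _ => by rw [map_smul]; rfl }
  have hsep : ∀ s, s ≠ 0 → (A' s).SeparatingLeft := fun s hs v hv => by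
    have hvN : (v : V) ∈ N := by
      rw [← hker s hs, mem_ker]
      ext v'
      obtain ⟨x, hx, y, hy, rfl⟩ := Submodule.mem_sup.mp
        (hNM.sup_eq_top ▸ Submodule.mem_top : v' ∈ N ⊔ M)
      have hxv : A s x v = 0 := LinearMap.congr_fun (mem_ker.mp ((hker s hs).ge hx)) v
      rw [map_add, ← (halt s).neg, hxv, neg_zero, zero_add]
      exact hv ⟨y, hy⟩
    exact Subtype.ext (Submodule.disjoint_def.mp hNM.disjoint _ hvN v.2)
  have hle := two_mul_finrank_le_of_isAlt_of_separatingLeft A' (fun s v => halt s v) hsep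
  have hsum := Submodule.finrank_add_eq_of_isCompl hNM
  omega

end BilinearForms

section CaminaBracket

open Module LinearMap

variable {K V W A : Type*} [Field K] [AddCommGroup V] [Module K V] [AddCommGroup W] [Module K W]
  [AddCommGroup A] [Module K A]

/-- The vectors `v` orthogonal to the whole of `W` for the pairing `φ ∘ t` obtained from a bilinear
map `t : W × V → A` and a functional `φ` on `A`. -/
def pairingKer (t : W →ₗ[K] V →ₗ[K] A) (φ : Dual K A) : Submodule K V :=
  ker (t.compr₂ φ).flip

theorem mem_pairingKer {t : W →ₗ[K] V →ₗ[K] A} {φ : Dual K A} {v : V} :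
    v ∈ pairingKer t φ ↔ ∀ w, φ (t w v) = 0 :=
  LinearMap.ext_iff

theorem finrank_range_add_finrank_pairingKer [FiniteDimensional K V] (t : W →ₗ[K] V →ₗ[K] A)
    (φ : Dual K A) :
    finrank K (range (t.compr₂ φ)) + finrank K (pairingKer t φ) = finrank K V := by
  rw [← finrank_range_flip]
  exact finrank_range_add_finrank_ker _

/-- The brackets `m : γ₁/γ₂ × γ₁/γ₂ → γ₂/γ₃` and `t : γ₂/γ₃ × γ₁/γ₂ → γ₃/γ₄` of a Camina `p`-group,
as abstract bilinear maps. The field `bound` is what the group knows about `U` being the image of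
the centralizer of an element in the quotients of class three. -/
structure IsCaminaBracket (m : V →ₗ[K] V →ₗ[K] W) (t : W →ₗ[K] V →ₗ[K] A) : Prop where
  isAlt : m.IsAlt
  surjective : ∀ v, v ≠ 0 → Function.Surjective (m v)
  nondegenerate : ∀ φ : Dual K A, (∀ w v, φ (t w v) = 0) → φ = 0
  jacobi : ∀ x y z, t (m x y) z + t (m y z) x + t (m z x) y = 0
  bound : ∀ (S : Submodule K (Dual K A)) (U : Submodule K V), U ≠ ⊥ →
    (∀ u ∈ U, u ≠ 0 → ker (m u) = U) → (∀ s ∈ S, ∀ w, ∀ u ∈ U, s (t w u) = 0) →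
    2 * finrank K S ≤ finrank K U

namespace IsCaminaBracket

variable {m : V →ₗ[K] V →ₗ[K] W} {t : W →ₗ[K] V →ₗ[K] A}

theorem separatingLeft_compr₂ (h : IsCaminaBracket m t) {l : Dual K W} (hl : l ≠ 0) :
    (m.compr₂ l).SeparatingLeft := by
  intro v hv
  by_contra hv0
  refine hl (LinearMap.ext fun w => ?_)
  obtain ⟨v', rfl⟩ := h.surjective v hv0 w
  exact hv v'

theorem map_mem_ker_compr₂ (h : IsCaminaBracket m t) {φ : Dual K A} {x y : V}
    (hx : x ∈ pairingKer t φ) (hy : y ∈ pairingKer t φ) : m x y ∈ ker (t.compr₂ φ) := by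
  ext z
  have hxyz := congrArg φ (h.jacobi x y z)
  rwa [map_add, map_add, mem_pairingKer.mp hx, mem_pairingKer.mp hy, map_zero, add_zero,
    add_zero] at hxyz

theorem compr₂_ne_zero (h : IsCaminaBracket m t) {φ : Dual K A} (hφ : φ ≠ 0) :
    t.compr₂ φ ≠ 0 := fun h0 =>
  hφ (h.nondegenerate φ fun w v => LinearMap.congr_fun₂ h0 w v)

theorem nontrivial (h : IsCaminaBracket m t) {φ : Dual K A} (hφ : φ ≠ 0) : Nontrivial V := by
  by_contra hV
  rw [not_nontrivial_iff_subsingleton] at hV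
  refine hφ (h.nondegenerate φ fun w v => ?_)
  rw [Subsingleton.elim v 0, map_zero, map_zero]

variable [FiniteDimensional K V]

theorem finrank_add_finrank_ker (h : IsCaminaBracket m t) {v : V} (hv : v ≠ 0) :
    finrank K W + finrank K (ker (m v)) = finrank K V := by
  rw [← finrank_range_add_finrank_ker (m v), range_eq_top.mpr (h.surjective v hv), finrank_top]

theorem two_mul_finrank_le_finrank [Finite K] [Nontrivial V] (h : IsCaminaBracket m t) :
    2 * finrank K W ≤ finrank K V := by
  let F : Dual K W →ₗ[K] V →ₗ[K] V →ₗ[K] K :=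
    { toFun := fun l => m.compr₂ l
      map_add' := fun _ _ => rfl
      map_smul' := fun _ _ => rfl }
  rw [← Subspace.dual_finrank_eq]
  refine two_mul_finrank_le_of_isAlt_of_separatingLeft F (fun l v => ?_) fun l hl =>
    h.separatingLeft_compr₂ hl
  exact (congrArg l (h.isAlt v)).trans (map_zero l)

theorem finrank_le_two_mul_finrank_range (h : IsCaminaBracket m t) {φ : Dual K A} (hφ : φ ≠ 0) :
    finrank K V ≤ 2 * finrank K (range (t.compr₂ φ)) := by
  obtain ⟨w, hw⟩ : ∃ w, w ∉ ker (t.compr₂ φ) := by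
    by_contra! hker
    exact h.compr₂_ne_zero hφ (LinearMap.ext hker)
  obtain ⟨l, hlw, hl⟩ := Submodule.exists_le_ker_of_notMem hw
  have hl0 : l ≠ 0 := by
    rintro rfl
    exact hlw rfl
  have hiso := two_mul_finrank_le_of_isotropic (h.separatingLeft_compr₂ hl0)
    (U := pairingKer t φ) fun x hx y hy =>
      hl (h.map_mem_ker_compr₂ hx hy)
  have hsum := finrank_range_add_finrank_pairingKer t φ
  omega

variable [FiniteDimensional K W] [Finite K] {φ : Dual K A}

theorem finrank_range_compr₂ (h : IsCaminaBracket m t) (hφ : φ ≠ 0) :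
    finrank K (range (t.compr₂ φ)) = finrank K W := by
  have := h.nontrivial hφ
  have hW := h.two_mul_finrank_le_finrank
  have hV := h.finrank_le_two_mul_finrank_range hφ
  have hle := finrank_range_le (t.compr₂ φ)
  omega

theorem ker_compr₂_eq_bot (h : IsCaminaBracket m t) (hφ : φ ≠ 0) : ker (t.compr₂ φ) = ⊥ := by
  have hsum := finrank_range_add_finrank_ker (t.compr₂ φ)
  rw [h.finrank_range_compr₂ hφ] at hsum
  exact Submodule.finrank_eq_zero.mp (by omega)

theorem finrank_eq_two_mul (h : IsCaminaBracket m t) (hφ : φ ≠ 0) :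
    finrank K V = 2 * finrank K W := by
  have := h.nontrivial hφ
  refine le_antisymm ?_ h.two_mul_finrank_le_finrank
  rw [← h.finrank_range_compr₂ hφ]
  exact h.finrank_le_two_mul_finrank_range hφ

theorem finrank_pos (h : IsCaminaBracket m t) (hφ : φ ≠ 0) : 0 < finrank K W := by
  have := h.nontrivial hφ
  have hV : 0 < finrank K V := Module.finrank_pos
  have := h.finrank_eq_two_mul hφ
  omega

theorem finrank_pairingKer (h : IsCaminaBracket m t) (hφ : φ ≠ 0) :
    finrank K (pairingKer t φ) = finrank K W := by
  have hsum := finrank_range_add_finrank_pairingKer t φ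
  rw [h.finrank_range_compr₂ hφ, h.finrank_eq_two_mul hφ] at hsum
  omega

theorem pairingKer_ne_bot (h : IsCaminaBracket m t) (hφ : φ ≠ 0) : pairingKer t φ ≠ ⊥ := by
  rw [← Submodule.one_le_finrank_iff, h.finrank_pairingKer hφ]
  exact h.finrank_pos hφ

theorem map_eq_zero (h : IsCaminaBracket m t) (hφ : φ ≠ 0) {x y : V} (hx : x ∈ pairingKer t φ)
    (hy : y ∈ pairingKer t φ) : m x y = 0 :=
  (Submodule.mem_bot K).mp (h.ker_compr₂_eq_bot hφ ▸ h.map_mem_ker_compr₂ hx hy)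

theorem ker_eq_pairingKer (h : IsCaminaBracket m t) (hφ : φ ≠ 0) {u : V}
    (hu : u ∈ pairingKer t φ) (hu0 : u ≠ 0) : ker (m u) = pairingKer t φ := by
  have hsum := h.finrank_add_finrank_ker hu0
  have hV := h.finrank_eq_two_mul hφ
  have hU := h.finrank_pairingKer hφ
  exact (Submodule.eq_of_le_of_finrank_le (fun v hv => h.map_eq_zero hφ hu hv) (by omega)).symm

theorem surjective_right (h : IsCaminaBracket m t) {w : W} (hw : w ≠ 0) :
    Function.Surjective (t w) := by
  rw [← range_eq_top]
  by_contra htop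
  obtain ⟨φ, hφ, hle⟩ := Submodule.exists_le_ker_of_lt_top _ (lt_top_iff_ne_top.mpr htop)
  refine hw ((Submodule.mem_bot K).mp (h.ker_compr₂_eq_bot hφ ▸ ?_))
  ext v
  exact hle ⟨v, rfl⟩

-- All nonzero functionals killing `t(W, v)` have the same `pairingKer`, namely `ker (m v)`.
theorem two_mul_finrank_dualAnnihilator_le (h : IsCaminaBracket m t) {v : V} (hv : v ≠ 0) :
    2 * finrank K (range (t.flip v)).dualAnnihilator ≤ finrank K W := by
  set S := (range (t.flip v)).dualAnnihilator
  have hvS : ∀ φ ∈ S, v ∈ pairingKer t φ := fun φ hφ =>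
    mem_pairingKer.mpr fun w => (Submodule.mem_dualAnnihilator φ).mp hφ _ ⟨w, rfl⟩
  by_cases hS : S = ⊥
  · rw [hS, finrank_bot]
    omega
  obtain ⟨φ, hφS, hφ⟩ := Submodule.exists_mem_ne_zero_of_ne_bot hS
  rw [← h.finrank_pairingKer hφ]
  refine h.bound S _ (h.pairingKer_ne_bot hφ) (fun u hu hu0 => h.ker_eq_pairingKer hφ hu hu0)
    fun ψ hψS w u hu => ?_
  by_cases hψ : ψ = 0
  · rw [hψ, LinearMap.zero_apply]
  rw [← h.ker_eq_pairingKer hφ (hvS φ hφS) hv, h.ker_eq_pairingKer hψ (hvS ψ hψS) hv] at hu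
  exact mem_pairingKer.mp hu w

variable [FiniteDimensional K A]

theorem two_le_finrank (h : IsCaminaBracket m t) (hφ : φ ≠ 0) : 2 ≤ finrank K W := by
  obtain ⟨u, hu, hu0⟩ := Submodule.exists_mem_ne_zero_of_ne_bot (h.pairingKer_ne_bot hφ)
  have hmem : φ ∈ (range (t.flip u)).dualAnnihilator := by
    rw [Submodule.mem_dualAnnihilator]
    rintro _ ⟨w, rfl⟩
    exact mem_pairingKer.mp hu w
  have hpos := Submodule.one_le_finrank_iff.mpr fun hbot =>
    hφ ((Submodule.mem_bot K).mp (hbot ▸ hmem))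
  have hle := h.two_mul_finrank_dualAnnihilator_le hu0
  omega

theorem two_mul_finrank_le_add (h : IsCaminaBracket m t) {v : V} (hv : v ≠ 0) :
    2 * finrank K A ≤ finrank K W + 2 * finrank K (range (t.flip v)) := by
  have hle := h.two_mul_finrank_dualAnnihilator_le hv
  have hann := Subspace.finrank_add_finrank_dualAnnihilator_eq (range (t.flip v))
  omega

theorem two_mul_finrank_add_two_le (h : IsCaminaBracket m t) (hφ : φ ≠ 0) :
    2 * finrank K A + 2 ≤ 3 * finrank K W := by
  have := h.nontrivial hφ
  have hn := h.finrank_pos hφ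
  have := Module.nontrivial_of_finrank_pos hn
  obtain ⟨w, hw⟩ := exists_ne (0 : W)
  obtain ⟨v₁, hv₁⟩ := exists_ne (0 : V)
  have hA := h.two_mul_finrank_le_add hv₁
  have hr := finrank_range_le (t.flip v₁)
  obtain ⟨v, hwv, hv⟩ := Submodule.exists_mem_ne_zero_of_ne_bot
    (ker_ne_bot_of_finrank_lt (f := t w) (by
      rw [h.finrank_eq_two_mul hφ]
      omega))
  have hker := Submodule.one_le_finrank_iff.mpr fun hbot : ker (t.flip v) = ⊥ =>
    hw ((Submodule.mem_bot K).mp (hbot ▸ hwv))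
  have hrank := finrank_range_add_finrank_ker (t.flip v)
  have hA' := h.two_mul_finrank_le_add hv
  omega

-- Off `pairingKer t φ` the functional `φ (t · a)` is `σ` and on it it vanishes, so `t.compr₂ φ` has
-- rank at most one.
theorem eq_zero_of_apply_eq (h : IsCaminaBracket m t) (σ : Dual K W)
    (hσ : ∀ c ∈ pairingKer t φ, ∀ a, φ (t (m c a) a) = σ (m c a)) : φ = 0 := by
  by_contra hφ
  have hoff : ∀ a ∉ pairingKer t φ, (t.compr₂ φ).flip a = σ := fun a ha => by
    have hinf : pairingKer t φ ⊓ ker (m.flip a) = ⊥ := by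
      rw [eq_bot_iff]
      rintro c ⟨hc, hca⟩
      by_contra hc0
      exact ha (h.ker_eq_pairingKer hφ hc hc0 ▸ hca)
    have hmap := finrank_map_add_finrank_inf_ker (m.flip a) (pairingKer t φ)
    rw [hinf, finrank_bot, h.finrank_pairingKer hφ, add_zero] at hmap
    ext w
    obtain ⟨c, hc, rfl⟩ : w ∈ (pairingKer t φ).map (m.flip a) :=
      (Submodule.eq_top_of_finrank_eq hmap).ge Submodule.mem_top
    exact hσ c hc a
  have hrange : range (t.compr₂ φ).flip ≤ Submodule.span K {σ} := by
    rintro _ ⟨a, rfl⟩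
    by_cases ha : a ∈ pairingKer t φ
    · rw [mem_ker.mp ha]
      exact Submodule.zero_mem _
    · rw [hoff a ha]
      exact Submodule.mem_span_singleton_self σ
  have hspan : finrank K (Submodule.span K {σ}) ≤ 1 := by
    simpa using finrank_span_le_card (R := K) {σ}
  have hle := (Submodule.finrank_mono hrange).trans hspan
  rw [finrank_range_flip, h.finrank_range_compr₂ hφ] at hle
  have := h.two_le_finrank hφ
  omega

end IsCaminaBracket

/-- A Camina bracket together with the shadow of the fourth lower central factor under a functional
`ψ` on it: `κ v` is `a ↦ ψ [a, v]` on `γ₃/γ₄` and `β` is `ψ ∘ [·, ·]` on `γ₂/γ₃`. -/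
structure IsExtendedCaminaBracket (m : V →ₗ[K] V →ₗ[K] W) (t : W →ₗ[K] V →ₗ[K] A)
    (κ : V →ₗ[K] Dual K A) (β : W →ₗ[K] W →ₗ[K] K) : Prop extends IsCaminaBracket m t where
  isAlt_pairing : β.IsAlt
  jacobi_pairing : ∀ w v v', κ v' (t w v) - κ v (t w v') = β w (m v v')

namespace IsExtendedCaminaBracket

variable {m : V →ₗ[K] V →ₗ[K] W} {t : W →ₗ[K] V →ₗ[K] A} {κ : V →ₗ[K] Dual K A}
  {β : W →ₗ[K] W →ₗ[K] K}

theorem apply_of_mem_ker (h : IsExtendedCaminaBracket m t κ β) {c : V} (hc : c ∈ ker κ) (w : W)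
    (b : V) : κ b (t w c) = β w (m c b) := by
  rw [← h.jacobi_pairing, mem_ker.mp hc, LinearMap.zero_apply, sub_zero]

theorem mem_ker_pairing (h : IsExtendedCaminaBracket m t κ β) {w : W} :
    w ∈ ker β ↔ ∀ w', β w' w = 0 := by
  simp only [mem_ker, LinearMap.ext_iff, LinearMap.zero_apply]
  exact forall_congr' fun w' => by rw [← h.isAlt_pairing.neg, neg_eq_zero]

theorem map_mem_ker_pairing (h : IsExtendedCaminaBracket m t κ β) {c c' : V} (hc : c ∈ ker κ)
    (hc' : c' ∈ ker κ) : m c c' ∈ ker β := by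
  refine h.mem_ker_pairing.mpr fun w => ?_
  rw [← h.apply_of_mem_ker hc, mem_ker.mp hc', LinearMap.zero_apply]

theorem mem_pairingKer_of_mem_ker (h : IsExtendedCaminaBracket m t κ β) {c b : V}
    (hc : c ∈ ker κ) (hb : m c b ∈ ker β) : c ∈ pairingKer t (κ b) :=
  mem_pairingKer.mpr fun w => by rw [h.apply_of_mem_ker hc, h.mem_ker_pairing.mp hb]

theorem pairing_symm (h : IsExtendedCaminaBracket m t κ β) {c c' : V} (hc : c ∈ ker κ)
    (hc' : c' ∈ ker κ) (hcc' : m c c' = 0) (v b : V) :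
    β (m c v) (m c' b) = β (m c' v) (m c b) := by
  have hjac := h.jacobi c v c'
  rw [← h.isAlt.neg c c', hcc', neg_zero, map_zero, LinearMap.zero_apply, add_zero,
    ← h.isAlt.neg c' v, map_neg, LinearMap.neg_apply, ← sub_eq_add_neg, sub_eq_zero] at hjac
  rw [← h.apply_of_mem_ker hc', ← h.apply_of_mem_ker hc, hjac]

variable [FiniteDimensional K V] [FiniteDimensional K W]

theorem finrank_ker_le (h : IsExtendedCaminaBracket m t κ β) {c : V} (hc : c ∈ ker κ) :
    finrank K (ker κ) ≤
      finrank K (ker β) + finrank K (ker κ ⊓ ker (m c) : Submodule K V) := by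
  rw [← finrank_map_add_finrank_inf_ker (m c)]
  refine Nat.add_le_add_right (Submodule.finrank_mono ?_) _
  rintro _ ⟨c', hc', rfl⟩
  exact h.map_mem_ker_pairing hc hc'

variable [Finite K]

theorem finrank_comap_ker_pairing (h : IsExtendedCaminaBracket m t κ β) (hκ : κ ≠ 0) {c : V}
    (hc : c ≠ 0) :
    finrank K ((ker β).comap (m c)) = finrank K W + finrank K (ker β) := by
  obtain ⟨b, hb⟩ := DFunLike.ne_iff.mp hκ
  have hsum := h.finrank_add_finrank_ker hc
  rw [h.finrank_eq_two_mul hb] at hsum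
  rw [finrank_comap_of_surjective (h.surjective c hc)]
  omega

-- For `c' ∈ ker κ ⊓ ker (m c)` the forms `(v, b) ↦ β [c, v] [c', b]` are alternating (because
-- `2 ≠ 0`) with kernel `(m c)⁻¹ (ker β)`.
theorem two_mul_finrank_ker_inf_ker_le (h : IsExtendedCaminaBracket m t κ β) (h2 : (2 : K) ≠ 0)
    (hκ : κ ≠ 0) (hβ : ker β ≠ ⊤) {c : V} (hc : c ∈ ker κ) (hc0 : c ≠ 0) :
    2 * finrank K (ker κ ⊓ ker (m c) : Submodule K V) + finrank K (ker β) ≤ finrank K W := by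
  obtain ⟨b₀, hb₀⟩ := DFunLike.ne_iff.mp hκ
  let F : (ker κ ⊓ ker (m c) : Submodule K V) →ₗ[K] V →ₗ[K] V →ₗ[K] K :=
    LinearMap.mk₂ K (fun c' v => β (m c v) ∘ₗ m c')
      (fun _ _ _ => by ext; simp) (fun _ _ _ => by ext; simp)
      (fun _ _ _ => by ext; simp) (fun _ _ _ => by ext; simp)
  have halt : ∀ c', (F c').IsAlt := fun c' v => by
    have hsymm := h.pairing_symm hc c'.2.1 c'.2.2 v v
    rw [← h.isAlt_pairing.neg, neg_eq_iff_add_eq_zero, ← two_mul] at hsymm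
    rw [← neg_eq_zero]
    exact (h.isAlt_pairing.neg _ _).trans ((mul_eq_zero.mp hsymm).resolve_left h2)
  have hker : ∀ c', c' ≠ 0 → ker (F c') = (ker β).comap (m c) := fun c' hc' => by
    have hsurj := h.surjective (c' : V) fun h0 => hc' (Subtype.ext h0)
    ext v
    rw [Submodule.mem_comap, mem_ker, mem_ker]
    exact ⟨fun hv => (cancel_right hsurj).mp hv, fun hv => by ext; simp [F, hv]⟩
  have hne : (ker β).comap (m c) ≠ ⊤ := fun htop => hβ (eq_top_iff.mpr fun w _ => by
    obtain ⟨v, rfl⟩ := h.surjective c hc0 w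
    exact htop.ge (Submodule.mem_top (x := v)))
  have hle := two_mul_finrank_add_finrank_le_of_ker_eq F halt hne hker
  rw [h.finrank_comap_ker_pairing hκ hc0, h.finrank_eq_two_mul hb₀] at hle
  omega

variable [FiniteDimensional K A]

theorem finrank_add_two_le_two_mul_finrank_ker (h : IsExtendedCaminaBracket m t κ β)
    (hκ : κ ≠ 0) : finrank K W + 2 ≤ 2 * finrank K (ker κ) := by
  obtain ⟨b, hb⟩ := DFunLike.ne_iff.mp hκ
  have hA := h.two_mul_finrank_add_two_le hb
  have hrange : finrank K (range κ) ≤ finrank K A :=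
    (Submodule.finrank_le _).trans_eq Subspace.dual_finrank_eq
  have hsum := finrank_range_add_finrank_ker κ
  rw [h.finrank_eq_two_mul hb] at hsum
  omega

theorem finrank_add_two_mul_finrank_ker_pairing_le (h : IsExtendedCaminaBracket m t κ β)
    (hκ : κ ≠ 0) {c : V} (hc : c ∈ ker κ) (hc0 : c ≠ 0) :
    finrank K W + 2 * finrank K (ker β) ≤ 2 * finrank K (ker κ) := by
  have hle : ((ker β).comap (m c)).map κ ≤ (range (t.flip c)).dualAnnihilator := by
    rintro _ ⟨b, hb, rfl⟩
    rw [Submodule.mem_dualAnnihilator]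
    rintro _ ⟨w, rfl⟩
    exact mem_pairingKer.mp (h.mem_pairingKer_of_mem_ker hc hb) w
  have hmono := Submodule.finrank_mono hle
  have hinf : finrank K ((ker β).comap (m c) ⊓ ker κ : Submodule K V) ≤ finrank K (ker κ) :=
    Submodule.finrank_mono inf_le_right
  have hann := h.two_mul_finrank_dualAnnihilator_le hc0
  have hmap := finrank_map_add_finrank_inf_ker κ ((ker β).comap (m c))
  rw [h.finrank_comap_ker_pairing hκ hc0] at hmap
  omega

theorem ker_pairing_ne_top (h : IsExtendedCaminaBracket m t κ β) (hκ : κ ≠ 0) : ker β ≠ ⊤ := by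
  intro htop
  obtain ⟨b, hb⟩ := DFunLike.ne_iff.mp hκ
  have hC := h.finrank_add_two_le_two_mul_finrank_ker hκ
  obtain ⟨c, hc, hc0⟩ := Submodule.exists_mem_ne_zero_of_ne_bot
    (p := ker κ) (Submodule.one_le_finrank_iff.mp (by omega))
  have hR := h.finrank_add_two_mul_finrank_ker_pairing_le hκ hc hc0
  have hle : ker κ ≤ pairingKer t (κ b) := fun c' hc' =>
    h.mem_pairingKer_of_mem_ker hc' (htop ▸ Submodule.mem_top)
  have hmono := Submodule.finrank_mono hle
  rw [h.finrank_pairingKer hb] at hmono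
  rw [htop, finrank_top] at hR
  omega

theorem eq_zero (h : IsExtendedCaminaBracket m t κ β) (h2 : (2 : K) ≠ 0) : κ = 0 := by
  by_contra hκ
  have hC := h.finrank_add_two_le_two_mul_finrank_ker hκ
  obtain ⟨c, hc, hc0⟩ := Submodule.exists_mem_ne_zero_of_ne_bot
    (p := ker κ) (Submodule.one_le_finrank_iff.mp (by omega))
  have hR := h.finrank_add_two_mul_finrank_ker_pairing_le hκ hc hc0
  have hI := h.finrank_ker_le hc
  have hF := h.two_mul_finrank_ker_inf_ker_le h2 hκ (h.ker_pairing_ne_top hκ) hc hc0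
  omega

end IsExtendedCaminaBracket

end CaminaBracket

section LiftBilinear

variable {A A' B B' C : Type*} [AddGroup A] [AddGroup A'] [AddCommGroup B] [AddCommGroup B']
  [AddCommGroup C]

/-- The biadditive map on `B × B'` induced by a biadditive map on `A × A'` that vanishes on the
kernels of the surjections `f : A →+ B` and `g : A' →+ B'`. -/
noncomputable def liftBilinear (F : A →+ A' →+ C) {f : A →+ B} (hf : Function.Surjective f)
    {g : A' →+ B'} (hg : Function.Surjective g) (hFf : ∀ a, f a = 0 → F a = 0)
    (hFg : ∀ a a', g a' = 0 → F a a' = 0) : B →+ B' →+ C :=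
  f.liftOfSurjective hf
    ⟨.mk' (fun a => g.liftOfSurjective hg ⟨F a, hFg a⟩) fun a b => by
        refine (AddMonoidHom.cancel_right hg).mp (AddMonoidHom.ext fun c => ?_)
        simp,
      fun a ha => by
        refine (AddMonoidHom.cancel_right hg).mp (AddMonoidHom.ext fun c => ?_)
        simp [hFf a ha]⟩

theorem liftBilinear_apply_apply (F : A →+ A' →+ C) {f : A →+ B} (hf : Function.Surjective f)
    {g : A' →+ B'} (hg : Function.Surjective g) (hFf : ∀ a, f a = 0 → F a = 0)
    (hFg : ∀ a a', g a' = 0 → F a a' = 0) (a : A) (a' : A') :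
    liftBilinear F hf hg hFf hFg (f a) (g a') = F a a' := by
  simp [liftBilinear]

end LiftBilinear

section LowerCentralSeries

open scoped commutatorElement

variable {G : Type*} [Group G]

theorem commutator_commutator_le_of_rotate {A B C N : Subgroup G} [N.Normal]
    (h₁ : ⁅⁅B, C⁆, A⁆ ≤ N) (h₂ : ⁅⁅C, A⁆, B⁆ ≤ N) : ⁅⁅A, B⁆, C⁆ ≤ N := by
  rw [← QuotientGroup.ker_mk' N, ← Subgroup.map_eq_bot_iff, Subgroup.map_commutator,
    Subgroup.map_commutator] at *
  exact Subgroup.commutator_commutator_eq_bot_of_rotate h₁ h₂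

/-- The lower central series of the whole group, indexed so that `lcs G 0 = ⊤` and `lcs G 1` is the
derived subgroup. -/
abbrev lcs (G : Type*) [Group G] (n : ℕ) : Subgroup G := (⊤ : Subgroup G).lowerCentralSeries n

theorem lcs_one : lcs G 1 = commutator G := Subgroup.top_lowerCentralSeries_one

theorem lcs_succ_le (n : ℕ) : lcs G (n + 1) ≤ lcs G n :=
  Subgroup.lowerCentralSeries_antitone _ n.le_succ

theorem conj_mem_lcs {n : ℕ} {x : G} (hx : x ∈ lcs G n) (a : G) : a * x * a⁻¹ ∈ lcs G n :=
  (inferInstance : (lcs G n).Normal).conj_mem x hx a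

theorem commutator_lcs_le (i j : ℕ) : ⁅lcs G i, lcs G j⁆ ≤ lcs G (i + j + 1) := by
  induction i generalizing j with
  | zero =>
    rw [Subgroup.commutator_comm, zero_add]
    exact le_rfl
  | succ i ih =>
    refine commutator_commutator_le_of_rotate ?_ ?_
    · rw [Subgroup.commutator_comm ⊤, Subgroup.commutator_comm _ (lcs G i),
        add_assoc i, add_comm 1 j]
      exact ih (j + 1)
    · rw [Subgroup.commutator_comm (lcs G j), add_right_comm i]
      exact Subgroup.commutator_mono (ih j) le_rfl

theorem commutatorElement_mem_lcs {i j n : ℕ} (hn : n ≤ i + j + 1) {x y : G} (hx : x ∈ lcs G i)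
    (hy : y ∈ lcs G j) : ⁅x, y⁆ ∈ lcs G n :=
  Subgroup.lowerCentralSeries_antitone _ hn
    (commutator_lcs_le i j (Subgroup.commutator_mem_commutator hx hy))

theorem commutatorElement_mem_lcs_succ {n : ℕ} {x : G} (hx : x ∈ lcs G n) (y : G) :
    ⁅x, y⁆ ∈ lcs G (n + 1) :=
  Subgroup.commutator_mem_commutator hx (Subgroup.mem_top y)

theorem exists_mem_lcs_of_notMem {x : G} {n : ℕ} (hx : x ∉ lcs G n) :
    ∃ k < n, x ∈ lcs G k ∧ x ∉ lcs G (k + 1) := by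
  induction n with
  | zero => exact absurd (Subgroup.mem_top x) hx
  | succ n ih =>
    by_cases hn : x ∈ lcs G n
    · exact ⟨n, n.lt_succ_self, hn, hx⟩
    · obtain ⟨k, hk, h⟩ := ih hn
      exact ⟨k, hk.trans n.lt_succ_self, h⟩

theorem exists_lcs_eq_bot [Group.IsNilpotent G] : ∃ n, lcs G n = ⊥ :=
  Subgroup.nilpotent_iff_lowerCentralSeries.mp inferInstance

theorem lcs_eq_bot_of_le_succ [Group.IsNilpotent G] {n : ℕ} (h : lcs G n ≤ lcs G (n + 1)) :
    lcs G n = ⊥ := by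
  obtain ⟨k, hk⟩ := exists_lcs_eq_bot (G := G)
  have hle : ∀ j, lcs G n ≤ lcs G (n + j) := fun j => by
    induction j with
    | zero => exact le_rfl
    | succ j ih => exact h.trans (Subgroup.commutator_mono ih le_rfl)
  exact le_bot_iff.mp
    ((hle k).trans ((Subgroup.lowerCentralSeries_antitone _ (Nat.le_add_left k n)).trans_eq hk))

theorem mul_inv_mem_lcs_succ_of_isConj {x y : G} {n : ℕ} (h : IsConj x y) (hx : x ∈ lcs G n) :
    x * y⁻¹ ∈ lcs G (n + 1) := by
  obtain ⟨a, rfl⟩ := isConj_iff.mp h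
  simpa [commutatorElement_def, mul_assoc] using commutatorElement_mem_lcs_succ hx a

/-- The `n`-th factor of the lower central series, written additively. -/
def LCSFactor (G : Type*) [Group G] (n : ℕ) : Type _ :=
  Additive (lcs G n ⧸ (lcs G (n + 1)).subgroupOf (lcs G n))

namespace LCSFactor

variable {i j k n : ℕ}

instance [Finite G] : Finite (LCSFactor G n) :=
  inferInstanceAs (Finite (lcs G n ⧸ (lcs G (n + 1)).subgroupOf (lcs G n)))

theorem quotient_mul_comm (a b : lcs G n ⧸ (lcs G (n + 1)).subgroupOf (lcs G n)) :
    a * b = b * a := by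
  induction a, b using Quotient.inductionOn₂' with
  | h a b =>
    have hab : (a * b)⁻¹ * (b * a) = ⁅b⁻¹, a⁻¹⁆ := by
      rw [commutatorElement_def]
      group
    refine QuotientGroup.eq.mpr (Subgroup.mem_subgroupOf.mpr ?_)
    rw [hab]
    exact commutatorElement_mem_lcs_succ (inv_mem b.2) _

instance : AddCommGroup (LCSFactor G n) where
  toAddGroup := inferInstanceAs
    (AddGroup (Additive (lcs G n ⧸ (lcs G (n + 1)).subgroupOf (lcs G n))))
  add_comm := quotient_mul_comm

/-- The projection of the `n`-th term of the lower central series onto its factor. -/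
def mkHom (G : Type*) [Group G] (n : ℕ) : Additive (lcs G n) →+ LCSFactor G n :=
  (QuotientGroup.mk' ((lcs G (n + 1)).subgroupOf (lcs G n))).toAdditive

theorem mkHom_surjective : Function.Surjective (mkHom G n) :=
  QuotientGroup.mk'_surjective ((lcs G (n + 1)).subgroupOf (lcs G n))

open Classical in
/-- The class of an element of the `n`-th term of the lower central series in the factor, with the
junk value `0` on all other elements of the group. -/
noncomputable def mk (n : ℕ) (x : G) : LCSFactor G n :=
  if hx : x ∈ lcs G n then mkHom G n (.ofMul ⟨x, hx⟩) else 0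

theorem mk_of_mem {x : G} (hx : x ∈ lcs G n) : mk n x = mkHom G n (.ofMul ⟨x, hx⟩) :=
  dif_pos hx

theorem exists_mk_eq (a : LCSFactor G n) : ∃ x ∈ lcs G n, mk n x = a := by
  obtain ⟨x, rfl⟩ := mkHom_surjective a
  exact ⟨x.toMul, x.toMul.2, mk_of_mem x.toMul.2⟩

theorem mk_mul {x y : G} (hx : x ∈ lcs G n) (hy : y ∈ lcs G n) :
    mk n (x * y) = mk n x + mk n y := by
  rw [mk_of_mem hx, mk_of_mem hy, mk_of_mem (mul_mem hx hy), ← map_add]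
  rfl

theorem mk_eq_zero_iff {x : G} (hx : x ∈ lcs G n) : mk n x = 0 ↔ x ∈ lcs G (n + 1) := by
  rw [mk_of_mem hx]
  exact (QuotientGroup.eq_one_iff _).trans Subgroup.mem_subgroupOf

theorem mk_eq_zero {x : G} (hx : x ∈ lcs G (n + 1)) : mk n x = 0 :=
  (mk_eq_zero_iff (lcs_succ_le n hx)).mpr hx

theorem mk_one : mk n (1 : G) = 0 := mk_eq_zero (one_mem _)

theorem mk_inv {x : G} (hx : x ∈ lcs G n) : mk n x⁻¹ = -mk n x := by
  rw [eq_neg_iff_add_eq_zero, ← mk_mul (inv_mem hx) hx, inv_mul_cancel, mk_one]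

theorem mk_conj {x : G} (hx : x ∈ lcs G n) (a : G) : mk n (a * x * a⁻¹) = mk n x := by
  have hax := conj_mem_lcs hx a
  rw [eq_comm, ← sub_eq_zero, sub_eq_add_neg, ← mk_inv hax, ← mk_mul hx (inv_mem hax)]
  exact mk_eq_zero (mul_inv_mem_lcs_succ_of_isConj (isConj_iff.mpr ⟨a, rfl⟩) hx)

theorem lcs_eq_bot [Group.IsNilpotent G] [Subsingleton (LCSFactor G n)] : lcs G n = ⊥ :=
  lcs_eq_bot_of_le_succ fun _ hx => (mk_eq_zero_iff hx).mp (Subsingleton.elim _ _)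

theorem mk_commutatorElement_mul_left {H K : Subgroup G} (h : ⁅H, K⁆ ≤ lcs G n) {x y z : G}
    (hx : x ∈ H) (hy : y ∈ H) (hz : z ∈ K) : mk n ⁅x * y, z⁆ = mk n ⁅x, z⁆ + mk n ⁅y, z⁆ := by
  have hxz := h (Subgroup.commutator_mem_commutator hx hz)
  have hyz := h (Subgroup.commutator_mem_commutator hy hz)
  rw [commutatorElement_mul_left_eq_conj_mul,
    mk_mul (conj_mem_lcs hyz x) hxz, mk_conj hyz, add_comm]

theorem mk_commutatorElement_mul_right {H K : Subgroup G} (h : ⁅H, K⁆ ≤ lcs G n) {x y z : G}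
    (hx : x ∈ H) (hy : y ∈ K) (hz : z ∈ K) : mk n ⁅x, y * z⁆ = mk n ⁅x, y⁆ + mk n ⁅x, z⁆ := by
  have hxy := h (Subgroup.commutator_mem_commutator hx hy)
  have hxz := h (Subgroup.commutator_mem_commutator hx hz)
  rw [commutatorElement_mul_right_eq_mul_conj, mul_assoc, mul_assoc, ← mul_assoc y,
    mk_mul hxy (conj_mem_lcs hxz y), mk_conj hxz]

/-- The commutator of two subgroups `H` and `K` as a biadditive map into a factor of the lower
central series containing `⁅H, K⁆`. -/
noncomputable def commutatorHom {H K : Subgroup G} (h : ⁅H, K⁆ ≤ lcs G n) :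
    Additive H →+ Additive K →+ LCSFactor G n :=
  .mk' (fun x => .mk' (fun y => mk n ⁅(x.toMul : G), (y.toMul : G)⁆)
      fun y z => mk_commutatorElement_mul_right h x.toMul.2 y.toMul.2 z.toMul.2)
    fun x y => AddMonoidHom.ext fun z =>
      mk_commutatorElement_mul_left h x.toMul.2 y.toMul.2 z.toMul.2

theorem mem_lcs_succ_of_mkHom_eq_zero {x : Additive (lcs G n)} (hx : mkHom G n x = 0) :
    (x.toMul : G) ∈ lcs G (n + 1) := by
  rwa [← mk_eq_zero_iff x.toMul.2, mk_of_mem x.toMul.2]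

/-- The Lie bracket on the graded group of the factors of the lower central series, induced by the
commutator. The degrees are shifted by one since the series is indexed from `0`. -/
noncomputable def bracket (i j : ℕ) (h : i + j + 1 = n) :
    LCSFactor G i →+ LCSFactor G j →+ LCSFactor G n :=
  liftBilinear (commutatorHom (h ▸ commutator_lcs_le i j)) mkHom_surjective mkHom_surjective
    (fun _ hx => AddMonoidHom.ext fun y => mk_eq_zero <|
      commutatorElement_mem_lcs (by omega) (mem_lcs_succ_of_mkHom_eq_zero hx) y.toMul.2)
    (fun x _ hy => mk_eq_zero <|
      commutatorElement_mem_lcs (by omega) x.toMul.2 (mem_lcs_succ_of_mkHom_eq_zero hy))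

theorem bracket_mk (h : i + j + 1 = n) {x y : G} (hx : x ∈ lcs G i) (hy : y ∈ lcs G j) :
    bracket i j h (mk i x) (mk j y) = mk n ⁅x, y⁆ := by
  rw [mk_of_mem hx, mk_of_mem hy]
  exact liftBilinear_apply_apply _ _ _ _ _ _ _

theorem bracket_self (h : i + i + 1 = n) (a : LCSFactor G i) : bracket i i h a a = 0 := by
  obtain ⟨x, hx, rfl⟩ := exists_mk_eq a
  rw [bracket_mk h hx hx, commutatorElement_self, mk_one]

theorem neg_bracket (hij : i + j + 1 = n) (hji : j + i + 1 = n) (a : LCSFactor G i)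
    (b : LCSFactor G j) : -bracket i j hij a b = bracket j i hji b a := by
  obtain ⟨x, hx, rfl⟩ := exists_mk_eq a
  obtain ⟨y, hy, rfl⟩ := exists_mk_eq b
  rw [bracket_mk hij hx hy, bracket_mk hji hy hx, ← commutatorElement_inv x,
    mk_inv (commutatorElement_mem_lcs hij.ge hx hy)]

theorem bracket_jacobi {ij jk ki : ℕ} (hij : i + j + 1 = ij) (hjk : j + k + 1 = jk)
    (hki : k + i + 1 = ki) (h₁ : ij + k + 1 = n) (h₂ : jk + i + 1 = n) (h₃ : ki + j + 1 = n)
    (a : LCSFactor G i) (b : LCSFactor G j) (c : LCSFactor G k) :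
    bracket ij k h₁ (bracket i j hij a b) c + bracket jk i h₂ (bracket j k hjk b c) a
      + bracket ki j h₃ (bracket k i hki c a) b = 0 := by
  obtain ⟨x, hx, rfl⟩ := exists_mk_eq a
  obtain ⟨y, hy, rfl⟩ := exists_mk_eq b
  obtain ⟨z, hz, rfl⟩ := exists_mk_eq c
  have hxy := commutatorElement_mem_lcs hij.ge hx hy
  have hyz := commutatorElement_mem_lcs hjk.ge hy hz
  have hzx := commutatorElement_mem_lcs hki.ge hz hx
  have hxyz := commutatorElement_mem_lcs h₁.ge hxy (conj_mem_lcs hz y)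
  have hyzx := commutatorElement_mem_lcs h₂.ge hyz (conj_mem_lcs hx z)
  have hzxy := commutatorElement_mem_lcs h₃.ge hzx (conj_mem_lcs hy x)
  rw [bracket_mk hij hx hy, bracket_mk hjk hy hz, bracket_mk hki hz hx, ← mk_conj hz y,
    ← mk_conj hx z, ← mk_conj hy x, bracket_mk h₁ hxy (conj_mem_lcs hz y),
    bracket_mk h₂ hyz (conj_mem_lcs hx z), bracket_mk h₃ hzx (conj_mem_lcs hy x),
    ← mk_mul hxyz hyzx, ← mk_mul (mul_mem hxyz hyzx) hzxy,
    commutatorElement_commutatorElement_conj_mul, mk_one]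

theorem addMonoidHom_ext {B : Type*} [AddCommGroup B] (h : i + 0 + 1 = n)
    {f g : LCSFactor G n →+ B}
    (hfg : ∀ a b, f (bracket i 0 h a b) = g (bracket i 0 h a b)) : f = g := by
  subst h
  ext c
  obtain ⟨z, hz, rfl⟩ := exists_mk_eq c
  induction hz using Subgroup.closure_induction with
  | mem z hz =>
    obtain ⟨x, hx, y, hy, rfl⟩ := hz
    rw [← bracket_mk (j := 0) rfl hx hy, hfg]
  | one => simp only [mk_one, map_zero]
  | mul x y hx hy ihx ihy => rw [mk_mul hx hy, map_add, map_add, ihx, ihy]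
  | inv x hx ih => rw [mk_inv hx, map_neg, map_neg, ih]

theorem mul_self_mem_lcs_succ (h2 : ∀ n (a : LCSFactor G n), 2 • a = 0) {x : G} (hx : x ∈ lcs G n) :
    x * x ∈ lcs G (n + 1) := by
  rw [← mk_eq_zero_iff (mul_mem hx hx), mk_mul hx hx, ← two_nsmul, h2]

theorem exists_addMonoidHom_mul_self (hn : 1 ≤ n) (h2 : ∀ n (a : LCSFactor G n), 2 • a = 0) :
    ∃ σ : LCSFactor G n →+ LCSFactor G (n + 1),
      ∀ x ∈ lcs G n, σ (mk n x) = mk (n + 1) (x * x) := by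
  have hadd : ∀ x ∈ lcs G n, ∀ y ∈ lcs G n,
      mk (n + 1) (x * y * (x * y)) = mk (n + 1) (x * x) + mk (n + 1) (y * y) := by
    intro x hx y hy
    have hxx := mul_self_mem_lcs_succ h2 hx
    have hyy := mul_self_mem_lcs_succ h2 hy
    have hyx : ⁅y, x⁆ ∈ lcs G (n + 2) := commutatorElement_mem_lcs (by omega) hy hx
    have hmul : x * y * (x * y) = x * ⁅y, x⁆ * x⁻¹ * (x * x * (y * y)) := by
      rw [commutatorElement_def]
      group
    rw [hmul, mk_mul (lcs_succ_le _ (conj_mem_lcs hyx x)) (mul_mem hxx hyy),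
      mk_eq_zero (conj_mem_lcs hyx x), mk_mul hxx hyy, zero_add]
  let F : Additive (lcs G n) →+ LCSFactor G (n + 1) :=
    .mk' (fun x => mk (n + 1) ((x.toMul : G) * x.toMul)) fun x y =>
      hadd _ x.toMul.2 _ y.toMul.2
  have hF : (mkHom G n).ker ≤ F.ker := fun x hx =>
    have hx := mem_lcs_succ_of_mkHom_eq_zero hx
    mk_eq_zero (mul_self_mem_lcs_succ h2 hx)
  refine ⟨(mkHom G n).liftOfSurjective mkHom_surjective ⟨F, hF⟩, fun x hx => ?_⟩
  rw [mk_of_mem hx]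
  exact AddMonoidHom.liftOfRightInverse_comp_apply _ _ _ ⟨F, hF⟩ _

/-- The elements of the `n`-th term of the lower central series whose classes lie in `U`. -/
def preimage (U : AddSubgroup (LCSFactor G n)) : Subgroup G where
  carrier := {x | x ∈ lcs G n ∧ mk n x ∈ U}
  mul_mem' hx hy := ⟨mul_mem hx.1 hy.1, mk_mul hx.1 hy.1 ▸ add_mem hx.2 hy.2⟩
  one_mem' := ⟨one_mem _, mk_one (G := G) ▸ zero_mem U⟩
  inv_mem' hx := ⟨inv_mem hx.1, mk_inv hx.1 ▸ neg_mem hx.2⟩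

/-- The projection of `preimage U` onto `U`. -/
noncomputable def preimageHom (U : AddSubgroup (LCSFactor G n)) : Additive (preimage U) →+ U :=
  .mk' (fun x => ⟨mk n (x.toMul : G), x.toMul.2.2⟩) fun x y =>
    Subtype.ext (mk_mul x.toMul.2.1 y.toMul.2.1)

theorem preimageHom_surjective (U : AddSubgroup (LCSFactor G n)) :
    Function.Surjective (preimageHom U) := by
  rintro ⟨u, hu⟩
  obtain ⟨x, hx, rfl⟩ := exists_mk_eq u
  exact ⟨.ofMul ⟨x, hx, hu⟩, rfl⟩

end LCSFactor

end LowerCentralSeries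

section Linear

/-- The bilinear map over `ZMod p` given by a biadditive map. -/
def toZModBilinear (p : ℕ) {B B' C : Type*} [AddCommGroup B] [AddCommGroup B'] [AddCommGroup C]
    [Module (ZMod p) B] [Module (ZMod p) B'] [Module (ZMod p) C] (F : B →+ B' →+ C) :
    B →ₗ[ZMod p] B' →ₗ[ZMod p] C :=
  (AddMonoidHom.mk' (fun b => (F b).toZModLinearMap p) fun b b' =>
    LinearMap.ext fun c => by simp).toZModLinearMap p

namespace LCSFactor

variable {G : Type*} [Group G] {n : ℕ}

/-- The Lie bracket as a bilinear map, for a prime `p` annihilating the factors. -/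
noncomputable def bracketₗ (p i j : ℕ) [∀ n, Module (ZMod p) (LCSFactor G n)] (h : i + j + 1 = n) :
    LCSFactor G i →ₗ[ZMod p] LCSFactor G j →ₗ[ZMod p] LCSFactor G n :=
  toZModBilinear p (bracket i j h)

theorem bracketₗ_apply_apply (p : ℕ) {i j : ℕ} [∀ n, Module (ZMod p) (LCSFactor G n)]
    (h : i + j + 1 = n) (a : LCSFactor G i) (b : LCSFactor G j) :
    bracketₗ p i j h a b = bracket i j h a b := rfl

end LCSFactor

end Linear

section ConjClasses

variable {G : Type*} [Group G]

/-- The conjugacy class of every element of `γₙ` outside `γₙ₊₁` is a coset of `γₙ₊₁`. Only the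
inclusion of the coset in the class is recorded, since the other one holds in every group. -/
def ConjClassesAreLCSCosets (G : Type*) [Group G] : Prop :=
  ∀ ⦃n : ℕ⦄ ⦃x y : G⦄, x ∈ lcs G n → x ∉ lcs G (n + 1) → x * y⁻¹ ∈ lcs G (n + 1) → IsConj x y

namespace ConjClassesAreLCSCosets

variable [Group.IsNilpotent G]

theorem isConj_inv_mul (hG : ConjClassesAreLCSCosets G) {h h' i i' : G} (hh : IsConj h h')
    (hi : IsConj i i') (hne : ¬IsConj i h) : IsConj (i⁻¹ * h) (i'⁻¹ * h') := by
  obtain ⟨c, hc⟩ := exists_lcs_eq_bot (G := G)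
  have hd : i⁻¹ * h ∉ lcs G c := by
    rw [hc, Subgroup.mem_bot, inv_mul_eq_one]
    rintro rfl
    exact hne (IsConj.refl i)
  obtain ⟨n, -, hn, hn'⟩ := exists_mem_lcs_of_notMem hd
  -- Were `i` outside `γₙ`, its class would be a coset containing `h`.
  have hin : i ∈ lcs G n := by
    by_contra hin
    obtain ⟨k, hk, hik, hik'⟩ := exists_mem_lcs_of_notMem hin
    refine hne (hG hik hik' ?_)
    have hconj : i * h⁻¹ = i * (i⁻¹ * h)⁻¹ * i⁻¹ := by group
    rw [hconj]
    exact conj_mem_lcs (inv_mem (Subgroup.lowerCentralSeries_antitone _ hk hn)) i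
  have hhn : h ∈ lcs G n := by
    rw [← mul_inv_cancel_left i h]
    exact mul_mem hin hn
  have hconj : i⁻¹ * h * (i'⁻¹ * h')⁻¹ = i⁻¹ * (h * h'⁻¹ * (i * i'⁻¹)⁻¹) * i⁻¹⁻¹ := by group
  refine hG hn hn' ?_
  rw [hconj]
  exact conj_mem_lcs (mul_mem (mul_inv_mem_lcs_succ_of_isConj hh hhn)
    (inv_mem (mul_inv_mem_lcs_succ_of_isConj hi hin))) _

theorem uniqueIntersectionNumberCondition (hG : ConjClassesAreLCSCosets G) :
    UniqueIntersectionNumberCondition G := by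
  intro Ch Ci hne
  obtain ⟨h, rfl⟩ := ConjClasses.exists_rep Ch
  obtain ⟨i, rfl⟩ := ConjClasses.exists_rep Ci
  refine ⟨ConjClasses.mk (i⁻¹ * h), ⟨h, ConjClasses.mem_carrier_mk,
    Set.mem_mul.mpr ⟨i, ConjClasses.mem_carrier_mk, _, ConjClasses.mem_carrier_mk,
      mul_inv_cancel_left i h⟩⟩, ?_⟩
  rintro Cj ⟨h', hh', hmul⟩
  obtain ⟨i', hi', j', hj', rfl⟩ := Set.mem_mul.mp hmul
  rw [ConjClasses.mem_carrier_iff_mk_eq] at hh' hi' hj'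
  rw [← hj', ← inv_mul_cancel_left i' j', ConjClasses.mk_eq_mk_iff_isConj]
  rw [eq_comm, ConjClasses.mk_eq_mk_iff_isConj] at hh' hi'
  exact (hG.isConj_inv_mul hh' hi' fun hc => hne (ConjClasses.mk_eq_mk_iff_isConj.mpr hc.symm)).symm

end ConjClassesAreLCSCosets

end ConjClasses

section CaminaGroup

open scoped commutatorElement
open Module LCSFactor

namespace IsCaminaGroup

variable {G : Type*} [Group G]

theorem exists_commutatorElement_eq (hG : IsCaminaGroup G) {x g : G} (hx : x ∉ lcs G 1)
    (hg : g ∈ lcs G 1) : ∃ y, ⁅x, y⁆ = g := by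
  rw [lcs_one] at hx hg
  have hgx : g⁻¹ * x ∈ conjugatesOf x := by
    rw [hG x hx, Set.mem_smul_set_iff_inv_smul_mem, smul_eq_mul, ← mul_assoc]
    exact Subgroup.Normal.conj_mem' inferInstance _ (inv_mem hg) x
  obtain ⟨y, hy⟩ := isConj_iff.mp hgx
  refine ⟨y, ?_⟩
  rw [← commutatorElement_inv, commutatorElement_def, hy, mul_inv_cancel_right, inv_inv]

theorem bracket_surjective (hG : IsCaminaGroup G) {a : LCSFactor G 0} (ha : a ≠ 0) :
    Function.Surjective (bracket 0 0 (zero_add 1) a) := by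
  intro b
  obtain ⟨x, hx, rfl⟩ := exists_mk_eq a
  obtain ⟨g, hg, rfl⟩ := exists_mk_eq b
  obtain ⟨y, rfl⟩ := hG.exists_commutatorElement_eq (mt mk_eq_zero ha) hg
  exact ⟨mk 0 y, bracket_mk _ hx (Subgroup.mem_top y)⟩

theorem exists_prime_nsmul_eq_zero [Finite G] [Group.IsNilpotent G] (hG : IsCaminaGroup G)
    (h1 : lcs G 1 ≠ ⊥) : ∃ p : ℕ, p.Prime ∧ ∀ n (a : LCSFactor G n), p • a = 0 := by
  have hnt : Nontrivial (LCSFactor G 1) := by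
    rw [← not_subsingleton_iff_nontrivial]
    exact fun _ => h1 lcs_eq_bot
  obtain ⟨p, hp, hdvd⟩ := Nat.exists_prime_and_dvd (Finite.one_lt_card (α := LCSFactor G 1)).ne'
  have := Fact.mk hp
  obtain ⟨c, hc⟩ := exists_prime_addOrderOf_dvd_card' p hdvd
  refine ⟨p, hp, fun n => ?_⟩
  induction n with
  | zero =>
    intro a
    by_contra hpa
    have hsurj : Function.Surjective (nsmulAddMonoidHom (α := LCSFactor G 1) p) := fun b => by
      obtain ⟨b', rfl⟩ := hG.bracket_surjective hpa b
      exact ⟨bracket 0 0 (zero_add 1) a b', by simp⟩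
    have hc0 : c = 0 := Finite.injective_iff_surjective.mpr hsurj (by
      simp [← hc, addOrderOf_nsmul_eq_zero])
    rw [hc0, addOrderOf_zero] at hc
    exact hp.ne_one hc.symm
  | succ n ih =>
    refine DFunLike.congr_fun (addMonoidHom_ext (f := nsmulAddMonoidHom p) (g := 0) rfl
      fun a b => ?_)
    rw [nsmulAddMonoidHom_apply, ← AddMonoidHom.nsmul_apply, ← map_nsmul, ih, map_zero]
    rfl

section PrimeExponent

variable {p : ℕ} [∀ n, Module (ZMod p) (LCSFactor G n)]

theorem commutator_le_lcs_two (U : Submodule (ZMod p) (LCSFactor G 0))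
    (hU : ∀ u ∈ U, u ≠ 0 → LinearMap.ker (bracketₗ p 0 0 (zero_add 1) u) = U) :
    ⁅preimage U.toAddSubgroup, preimage U.toAddSubgroup⁆ ≤ lcs G 2 := by
  refine Subgroup.commutator_le.mpr fun x hx y hy => ?_
  by_cases hx0 : mk 0 x = 0
  · exact commutatorElement_mem_lcs_succ ((mk_eq_zero_iff hx.1).mp hx0) y
  · have hxy := (hU _ hx.2 hx0).ge hy.2
    rw [LinearMap.mem_ker, bracketₗ_apply_apply, bracket_mk _ hx.1 hy.1] at hxy
    exact (mk_eq_zero_iff (commutatorElement_mem_lcs_succ hx.1 y)).mp hxy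

/-- Modulo the annihilator of `S` in `γ₃/γ₄`, the commutator of elements of the preimage of `U`
depends only on their classes in `U`. -/
theorem exists_linearMap_apply_eq_mk_commutatorElement
    (S : Submodule (ZMod p) (Dual (ZMod p) (LCSFactor G 2)))
    (U : Submodule (ZMod p) (LCSFactor G 0))
    (hU : ⁅preimage U.toAddSubgroup, preimage U.toAddSubgroup⁆ ≤ lcs G 2)
    (hS : ∀ s ∈ S, ∀ w, ∀ u ∈ U, s (bracketₗ p 1 0 (add_zero 2) w u) = 0) :
    ∃ T : S →ₗ[ZMod p] U →ₗ[ZMod p] U →ₗ[ZMod p] ZMod p, ∀ s x y (hx : mk 0 x ∈ U)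
      (hy : mk 0 y ∈ U), T s ⟨mk 0 x, hx⟩ ⟨mk 0 y, hy⟩ = s.1 (mk 2 ⁅x, y⁆) := by
  have hvan : ∀ x ∈ lcs G 1, ∀ y, mk 0 y ∈ U → ∀ s : S, s.1 (mk 2 ⁅x, y⁆) = 0 :=
    fun x hx y hy s => by
      rw [← bracket_mk (j := 0) (add_zero 2) hx (Subgroup.mem_top y)]
      exact hS _ s.2 _ _ hy
  have hvan' : ∀ x ∈ lcs G 1, ∀ y, mk 0 y ∈ U → ∀ s : S, s.1 (mk 2 ⁅y, x⁆) = 0 :=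
    fun x hx y hy s => by
      rw [← commutatorElement_inv, mk_inv (commutatorElement_mem_lcs_succ hx y), map_neg,
        hvan x hx y hy, neg_zero]
  let F : Additive (preimage U.toAddSubgroup) →+ Additive (preimage U.toAddSubgroup) →+
      Dual (ZMod p) S :=
    (commutatorHom hU).compr₂ (S.subtype.dualMap ∘ₗ Dual.eval _ _).toAddMonoidHom
  have hsurj := preimageHom_surjective U.toAddSubgroup
  have hmem : ∀ x, preimageHom U.toAddSubgroup x = 0 → (x.toMul : G) ∈ lcs G 1 := fun x hx =>
    (mk_eq_zero_iff x.toMul.2.1).mp (congrArg Subtype.val hx)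
  have hF : ∀ x, preimageHom U.toAddSubgroup x = 0 → F x = 0 := fun x hx =>
    AddMonoidHom.ext fun y => LinearMap.ext fun s => hvan _ (hmem x hx) _ y.toMul.2.2 s
  have hF' : ∀ x y, preimageHom U.toAddSubgroup y = 0 → F x y = 0 := fun x y hy =>
    LinearMap.ext fun s => hvan' _ (hmem y hy) _ x.toMul.2.2 s
  let T : U →ₗ[ZMod p] U →ₗ[ZMod p] Dual (ZMod p) S :=
    toZModBilinear p (liftBilinear F hsurj hsurj hF hF')
  refine ⟨(LinearMap.lflip.toLinearMap ∘ₗ T).flip, fun s x y hx hy => ?_⟩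
  exact DFunLike.congr_fun (liftBilinear_apply_apply F hsurj hsurj hF hF'
    (.ofMul ⟨x, Subgroup.mem_top x, hx⟩) (.ofMul ⟨y, Subgroup.mem_top y, hy⟩)) s

variable [Fact p.Prime] [Finite G]

theorem two_mul_finrank_le_finrank (hG : IsCaminaGroup G)
    (S : Submodule (ZMod p) (Dual (ZMod p) (LCSFactor G 2)))
    (U : Submodule (ZMod p) (LCSFactor G 0)) (hU0 : U ≠ ⊥)
    (hU : ∀ u ∈ U, u ≠ 0 → LinearMap.ker (bracketₗ p 0 0 (zero_add 1) u) = U)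
    (hS : ∀ s ∈ S, ∀ w, ∀ u ∈ U, s (bracketₗ p 1 0 (add_zero 2) w u) = 0) :
    2 * finrank (ZMod p) S ≤ finrank (ZMod p) U := by
  obtain ⟨T, hT⟩ := exists_linearMap_apply_eq_mk_commutatorElement S U
    (commutator_le_lcs_two U hU) hS
  have : Nontrivial U := U.nontrivial_iff_ne_bot.mpr hU0
  refine two_mul_finrank_le_of_isAlt_of_separatingLeft T ?_ ?_
  · rintro s ⟨v, hv⟩
    obtain ⟨x, -, rfl⟩ := exists_mk_eq v
    rw [hT, commutatorElement_self, mk_one, map_zero]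
  · rintro s hs ⟨v, hv⟩ hvT
    obtain ⟨x, hx, rfl⟩ := exists_mk_eq v
    by_contra hx0
    refine hs (Subtype.ext (LinearMap.ext fun c => ?_))
    obtain ⟨g, hg, rfl⟩ := exists_mk_eq c
    have hx0 : mk 0 x ≠ 0 := fun h0 => hx0 (Subtype.ext h0)
    obtain ⟨y, rfl⟩ := hG.exists_commutatorElement_eq (mt mk_eq_zero hx0) (lcs_succ_le 1 hg)
    have hy : mk 0 y ∈ U := by
      rw [← hU _ hv hx0, LinearMap.mem_ker, bracketₗ_apply_apply,
        bracket_mk _ hx (Subgroup.mem_top y), mk_eq_zero hg]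
    rw [← hT s x y hv hy, hvT]
    rfl

theorem isCaminaBracket (hG : IsCaminaGroup G) :
    IsCaminaBracket (bracketₗ (G := G) p 0 0 (zero_add 1)) (bracketₗ p 1 0 (add_zero 2)) where
  isAlt := bracket_self (zero_add 1)
  surjective _ ha := hG.bracket_surjective ha
  nondegenerate φ hφ := LinearMap.toAddMonoidHom_injective
    (addMonoidHom_ext (i := 1) (add_zero 2) (f := φ.toAddMonoidHom) (g := 0) hφ)
  jacobi := bracket_jacobi (zero_add 1) (zero_add 1) (zero_add 1) (add_zero 2) (add_zero 2)
    (add_zero 2)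
  bound := hG.two_mul_finrank_le_finrank

-- The functional required by `eq_zero_of_apply_eq` is induced by squaring, `γ₂/γ₃ → γ₃/γ₄`.
theorem subsingleton_lcsFactor_two [∀ n, Module (ZMod 2) (LCSFactor G n)]
    (hG : IsCaminaGroup G) : Subsingleton (LCSFactor G 2) := by
  have h2 : ∀ n (a : LCSFactor G n), 2 • a = 0 := fun n a => by
    rw [← Nat.cast_smul_eq_nsmul (ZMod 2), ZMod.natCast_self, zero_smul]
  obtain ⟨σ, hσ⟩ := exists_addMonoidHom_mul_self le_rfl h2
  refine subsingleton_of_forall_eq 0 fun g => (Module.forall_dual_apply_eq_zero_iff (ZMod 2) g).mp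
    fun φ => ?_
  refine LinearMap.congr_fun (hG.isCaminaBracket.eq_zero_of_apply_eq
    (φ ∘ₗ σ.toZModLinearMap 2) fun c hc a => ?_) g
  obtain ⟨x, hx, rfl⟩ := exists_mk_eq c
  obtain ⟨y, hy, rfl⟩ := exists_mk_eq a
  have hxy := commutatorElement_mem_lcs_succ hx y
  have hyy := mul_self_mem_lcs_succ h2 hy
  have hφ : φ (mk 2 ⁅y * y, x⁆) = 0 := by
    rw [← bracket_mk (j := 0) (add_zero 2) hyy hx]
    exact mem_pairingKer.mp hc _
  have hmul : ⁅y * y, x⁆⁻¹ = ⁅x, y⁆ * ⁅⁅x, y⁆, y⁆⁻¹ * ⁅x, y⁆⁻¹ * (⁅x, y⁆ * ⁅x, y⁆) := by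
    simp [commutatorElement_def, mul_assoc]
  have hxyy := inv_mem (commutatorElement_mem_lcs_succ hxy y)
  rw [← neg_eq_zero, ← map_neg, ← mk_inv (commutatorElement_mem_lcs_succ hyy x), hmul,
    mk_mul (conj_mem_lcs hxyy _) (mul_self_mem_lcs_succ h2 hxy), mk_conj hxyy,
    mk_inv (inv_mem_iff.mp hxyy), map_add, map_neg, neg_add_eq_zero, ← hσ _ hxy] at hφ
  rwa [bracketₗ_apply_apply, bracketₗ_apply_apply, bracket_mk _ hx hy,
    bracket_mk (j := 0) _ hxy hy]

theorem isExtendedCaminaBracket (hG : IsCaminaGroup G) (ψ : Dual (ZMod p) (LCSFactor G 3)) :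
    IsExtendedCaminaBracket (bracketₗ (G := G) p 0 0 (zero_add 1)) (bracketₗ p 1 0 (add_zero 2))
      ((bracketₗ p 2 0 (add_zero 3)).compr₂ ψ).flip
      ((bracketₗ p 1 1 (Nat.add_comm 2 1)).compr₂ ψ) where
  toIsCaminaBracket := hG.isCaminaBracket
  isAlt_pairing w := (congrArg ψ (bracket_self (Nat.add_comm 2 1) w)).trans (map_zero ψ)
  jacobi_pairing w v v' := by
    have hjac := bracket_jacobi (add_zero 2) (zero_add 1) (Nat.add_comm 1 1) (add_zero 3)
      (Nat.add_comm 2 1) (add_zero 3) w v v'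
    rw [← neg_bracket (add_zero 2) _ w v', ← neg_bracket (Nat.add_comm 2 1) _ w, map_neg,
      AddMonoidHom.neg_apply, ← sub_eq_add_neg, ← sub_eq_add_neg, sub_right_comm,
      sub_eq_zero] at hjac
    exact (map_sub ψ _ _).symm.trans (congrArg ψ hjac)

theorem subsingleton_lcsFactor_three (hG : IsCaminaGroup G) (hp : p ≠ 2) :
    Subsingleton (LCSFactor G 3) := by
  have h2 : (2 : ZMod p) ≠ 0 := Ring.two_ne_zero ((ZMod.ringChar_zmod_n p).trans_ne hp)
  refine subsingleton_of_forall_eq 0 fun g => (Module.forall_dual_apply_eq_zero_iff (ZMod p) g).mp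
    fun ψ => ?_
  have hκ := (hG.isExtendedCaminaBracket ψ).eq_zero h2
  exact DFunLike.congr_fun (addMonoidHom_ext (i := 2) (add_zero 3) (f := ψ.toAddMonoidHom) (g := 0)
    fun a b => LinearMap.congr_fun (LinearMap.congr_fun hκ b) a) g

end PrimeExponent

variable [Finite G] [Group.IsNilpotent G]

theorem lcs_three_eq_bot (hG : IsCaminaGroup G) : lcs G 3 = ⊥ := by
  by_cases h1 : lcs G 1 = ⊥
  · exact le_bot_iff.mp ((Subgroup.lowerCentralSeries_antitone _ (by decide)).trans_eq h1)
  obtain ⟨p, hp, hpa⟩ := hG.exists_prime_nsmul_eq_zero h1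
  have := Fact.mk hp
  let (n : ℕ) : Module (ZMod p) (LCSFactor G n) := AddCommGroup.zmodModule (hpa n)
  obtain rfl | hp2 := eq_or_ne p 2
  · have := hG.subsingleton_lcsFactor_two
    exact le_bot_iff.mp ((lcs_succ_le 2).trans_eq lcs_eq_bot)
  · have := hG.subsingleton_lcsFactor_three hp2
    exact lcs_eq_bot

theorem exists_commutatorElement_eq_of_mem_lcs_one (hG : IsCaminaGroup G) {x g : G}
    (hx : x ∈ lcs G 1) (hx' : x ∉ lcs G 2) (hg : g ∈ lcs G 2) : ∃ y, ⁅x, y⁆ = g := by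
  have h1 : lcs G 1 ≠ ⊥ := fun h1 => hx' ((Subgroup.mem_bot.mp (h1 ▸ hx)).symm ▸ one_mem _)
  obtain ⟨p, hp, hpa⟩ := hG.exists_prime_nsmul_eq_zero h1
  have := Fact.mk hp
  let (n : ℕ) : Module (ZMod p) (LCSFactor G n) := AddCommGroup.zmodModule (hpa n)
  obtain ⟨a, ha⟩ := (hG.isCaminaBracket (p := p)).surjective_right
    (mt (mk_eq_zero_iff hx).mp hx') (mk 2 g)
  obtain ⟨y, hy, rfl⟩ := exists_mk_eq a
  have hxy := commutatorElement_mem_lcs_succ hx y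
  rw [bracketₗ_apply_apply, bracket_mk (j := 0) _ hx hy, ← sub_eq_zero, sub_eq_add_neg,
    ← mk_inv hg, ← mk_mul hxy (inv_mem hg), mk_eq_zero_iff (mul_mem hxy (inv_mem hg)),
    hG.lcs_three_eq_bot, Subgroup.mem_bot, mul_inv_eq_one] at ha
  exact ⟨y, ha⟩

theorem exists_commutatorElement_eq_of_mem_lcs (hG : IsCaminaGroup G) {n : ℕ} {x g : G}
    (hx : x ∈ lcs G n) (hx' : x ∉ lcs G (n + 1)) (hg : g ∈ lcs G (n + 1)) : ∃ y, ⁅x, y⁆ = g := by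
  match n with
  | 0 => exact hG.exists_commutatorElement_eq hx' hg
  | 1 => exact hG.exists_commutatorElement_eq_of_mem_lcs_one hx hx' hg
  | n + 2 =>
    have hg3 : g ∈ lcs G 3 := Subgroup.lowerCentralSeries_antitone _ (by omega) hg
    rw [hG.lcs_three_eq_bot, Subgroup.mem_bot] at hg3
    exact ⟨1, by rw [hg3, commutatorElement_one_right]⟩

theorem conjClassesAreLCSCosets (hG : IsCaminaGroup G) : ConjClassesAreLCSCosets G := by
  intro n x y hx hx' hxy
  obtain ⟨a, ha⟩ := hG.exists_commutatorElement_eq_of_mem_lcs hx hx' hxy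
  rw [commutatorElement_def, mul_assoc, mul_assoc, mul_right_inj, ← mul_assoc] at ha
  refine isConj_iff.mpr ⟨a, inv_injective ?_⟩
  rw [← ha]
  group

end IsCaminaGroup

end CaminaGroup

theorem camina_pGroup_uniqueIntersectionNumberCondition_general (G : Type*) [Group G] [Finite G]
    [Group.IsNilpotent G] (hG : IsCaminaGroup G) : UniqueIntersectionNumberCondition G :=
  hG.conjClassesAreLCSCosets.uniqueIntersectionNumberCondition

/-- Every finite Camina `p`-group satisfies the unique intersection number condition. -/
theorem camina_pGroup_uniqueIntersectionNumberCondition (p : ℕ) (hp : p.Prime)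
    (G : Type*) [Group G] [Finite G] (hpG : IsPGroup p G) (hG : IsCaminaGroup G) :
    UniqueIntersectionNumberCondition G :=
  have := Fact.mk hp
  have := hpG.isNilpotent
  camina_pGroup_uniqueIntersectionNumberCondition_general G hG
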